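/- Let Γ be a group generated by a finite set S, let n ≥ 1, and let π : Γ → GL(n, ℝ) be a group homomorphism. Let Γ act on the Lie algebra 𝔤𝔩(n, ℝ) = M_n(ℝ) of GL(n, ℝ) by the adjoint action composed with π: γ · X = π(γ) X π(γ)⁻¹. Assume the first group cohomology H¹(Γ, M_n(ℝ)) with these coefficients vanishes, i.e. every map c : Γ → M_n(ℝ) satisfying c(γ₁γ₂) = c(γ₁) + γ₁ · c(γ₂) for all γ₁, γ₂ ∈ Γ is of the form c(γ) = γ · X − X for some fixed X ∈ M_n(ℝ). Then π is locally rigid: for every neighborhood U of the identity in GL(n, ℝ) there exists a neighborhood V of the identity in GL(n, ℝ) such that every homomorphism π' : Γ → GL(n, ℝ) with π'(s)·π(s)⁻¹ ∈ V for all s ∈ S is conjugate to π by an element of U, i.e. there exists g ∈ U with π'(γ) = g π(γ) g⁻¹ for all γ ∈ Γ. -/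

import Mathlib

open Matrix

/-!
An invertible `g` conjugates `π` to `ρ` exactly when `ρ s * g - g * π s = 0` for all `s ∈ S`, an
equation that is *linear* in `g`. So, writing `L_ρ g` for the tuple of left-hand sides, the implicit
function theorem reduces to inverting linear maps near the identity: if `P` is a generalized inverse
of `L_π`, then for `ρ` close to `π` the solution `g` of `g + P (L_ρ g - L_π g) = 1` is close to `1`
and satisfies `P (L_ρ g) = 0`.

For `ρ` close enough to `π` the residue `L_ρ g` is then zero. Otherwise rescale nonzero residues,
for `ρ` converging to `π`, so that they stay in a compact shell; they have a limit point `w ≠ 0`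
with `P w = 0`. Each residue is the restriction to `S` of the twisted derivation `γ ↦ ρ γ * g - g
* π γ`, and twisted derivations converge everywhere once they converge on generators, so `w` is
the restriction of a derivation `l` twisted by `π` on both sides. Now `γ ↦ l γ * (π γ)⁻¹` is a
cocycle, hence `w = L_π X` for some `X`, and `w = L_π (P (L_π X)) = L_π (P w) = 0`, a
contradiction.
-/

open Filter Topology

namespace WeilRigidity

section GeneralizedInverse

lemma exists_generalizedInverse {K V W : Type*} [Field K] [AddCommGroup V] [Module K V]
    [AddCommGroup W] [Module K W] (L : V →ₗ[K] W) :
    ∃ P : W →ₗ[K] V, L ∘ₗ P ∘ₗ L = L ∧ P ∘ₗ L ∘ₗ P = P := by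
  obtain ⟨s, hs⟩ := L.rangeRestrict.exists_rightInverse_of_surjective L.range_rangeRestrict
  obtain ⟨Q, hQ⟩ := s.exists_extend
  have hLQL (x : V) : L (Q (L x)) = L x := by
    have hQs : Q (L x) = s (L.rangeRestrict x) := LinearMap.congr_fun hQ (L.rangeRestrict x)
    rw [hQs]
    exact congrArg Subtype.val (LinearMap.congr_fun hs (L.rangeRestrict x))
  exact ⟨Q ∘ₗ L ∘ₗ Q, by ext x; simp [hLQL], by ext y; simp [hLQL]⟩

lemma generalizedInverse_apply_eq_zero {K V W : Type*} [Semiring K] [AddCommGroup V] [Module K V]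
    [AddCommGroup W] [Module K W] {L L' : V →ₗ[K] W} {P : W →ₗ[K] V} (hP : P ∘ₗ L ∘ₗ P = P)
    {e g : V} (he : L e = 0) (hg : g + P (L' g - L g) = e) : P (L' g) = 0 := by
  have hPLP (y : W) : P (L (P y)) = P y := LinearMap.congr_fun hP y
  calc P (L' g) = P (L g) + P (L (P (L' g - L g))) := by rw [hPLP, map_sub]; abel
    _ = P (L (g + P (L' g - L g))) := by rw [map_add, map_add]
    _ = 0 := by rw [hg, he, map_zero]

lemma exists_tendsto_generalizedInverse_apply_eq_zero {ι 𝕜 V W : Type*}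
    [NontriviallyNormedField 𝕜] [NormedAddCommGroup V] [NormedSpace 𝕜 V] [CompleteSpace V]
    [NormedAddCommGroup W] [NormedSpace 𝕜 W] {f : Filter ι} {L : ι → V →L[𝕜] W} {L₀ : V →L[𝕜] W}
    (hL : Tendsto L f (𝓝 L₀)) {P : W →L[𝕜] V} (hP : P ∘L L₀ ∘L P = P) {e : V} (he : L₀ e = 0) :
    ∃ g : ι → V, Tendsto g f (𝓝 e) ∧ ∀ᶠ i in f, P (L i (g i)) = 0 := by
  let T : ι → V →L[𝕜] V := fun i => 1 + P ∘L (L i - L₀)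
  have hT : Tendsto T f (𝓝 1) := by
    have hdiff : Tendsto (fun i => L i - L₀) f (𝓝 0) := by simpa using hL.sub_const L₀
    have hcomp : Tendsto (fun i => P ∘L (L i - L₀)) f (𝓝 (P ∘L (0 : V →L[𝕜] W))) :=
      (continuous_const.clm_comp continuous_id).tendsto _ |>.comp hdiff
    simpa [T] using hcomp.const_add 1
  have hTinv : Tendsto (fun i => Ring.inverse (T i)) f (𝓝 1) := by
    have hcomp := (NormedRing.inverse_continuousAt (1 : (V →L[𝕜] V)ˣ)).tendsto.comp hT
    rwa [Units.val_one, Ring.inverse_one] at hcomp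
  refine ⟨fun i => Ring.inverse (T i) e, ?_, ?_⟩
  · exact ((ContinuousLinearMap.apply 𝕜 V e).continuous.tendsto 1).comp hTinv
  · filter_upwards [hT.eventually (Units.nhds 1)] with i hi
    have hTe : T i (Ring.inverse (T i) e) = e :=
      DFunLike.congr_fun (Ring.mul_inverse_cancel _ hi) e
    exact generalizedInverse_apply_eq_zero (L := L₀.toLinearMap) (L' := (L i).toLinearMap)
      (P := P.toLinearMap) (congrArg ContinuousLinearMap.toLinearMap hP) he hTe

end GeneralizedInverse

section Limits

lemma eventually_eq_zero_of_forall_tendsto_smul (𝕜 : Type*) {ι W : Type*}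
    [NontriviallyNormedField 𝕜] [NormedAddCommGroup W] [NormedSpace 𝕜 W] [ProperSpace W]
    {f : Filter ι} {r : ι → W}
    (h : ∀ u ≤ f, u.NeBot → ∀ (a : ι → 𝕜) (w : W), Tendsto (fun i => a i • r i) u (𝓝 w) → w = 0) :
    ∀ᶠ i in f, r i = 0 := by
  refine mem_iff_ultrafilter.2 fun u hu => ?_
  by_contra hr
  obtain ⟨k, hk⟩ := NormedField.exists_one_lt_norm 𝕜
  have hshell (i : ι) : ∃ a : 𝕜, ‖a • r i‖ ≤ 1 ∧ (r i ≠ 0 → 1 / ‖k‖ ≤ ‖a • r i‖) := by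
    by_cases hi : r i = 0
    · exact ⟨0, by simp, fun hne => absurd hi hne⟩
    · obtain ⟨a, -, hlt, hge, -⟩ := rescale_to_shell hk one_pos hi
      exact ⟨a, hlt.le, fun _ => hge⟩
  choose a hle hge using hshell
  obtain ⟨w, -, hw⟩ := (isCompact_closedBall (0 : W) 1).ultrafilter_le_nhds
    (u.map fun i => a i • r i)
    (le_principal_iff.2 <| Ultrafilter.mem_map.2 <| univ_mem' fun i => by simpa using hle i)
  have hwpos : 1 / ‖k‖ ≤ ‖w‖ :=
    ge_of_tendsto (Tendsto.norm hw) ((Ultrafilter.eventually_not.2 hr).mono hge)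
  rw [h u hu u.neBot a w hw, norm_zero] at hwpos
  exact absurd hwpos (not_le.2 (by positivity))

lemma exists_mem_nhds_forall_of_eventually {ι X : Type*} [TopologicalSpace X] {x : X}
    {p : (ι → X) → Prop} (h : ∀ᶠ y in 𝓝 fun _ => x, p y) :
    ∃ V ∈ 𝓝 x, ∀ y : ι → X, (∀ i, y i ∈ V) → p y := by
  rw [nhds_pi] at h
  obtain ⟨I, t, ht, hIt⟩ := Filter.mem_pi'.1 h
  refine ⟨⋂ i ∈ I, t i, (biInter_finset_mem I).2 fun i _ => ht i, fun y hy => hIt fun i hi => ?_⟩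
  exact Set.mem_iInter₂.1 (hy i) i hi

lemma tendsto_apply_of_closure_eq_top {ι Γ G : Type*} [Group Γ] [Group G] [TopologicalSpace G]
    [IsTopologicalGroup G] {S : Set Γ} (hS : Subgroup.closure S = ⊤) {f : Filter ι}
    {ρ : ι → Γ →* G} {π : Γ →* G} (h : ∀ s ∈ S, Tendsto (fun i => ρ i s) f (𝓝 (π s))) (γ : Γ) :
    Tendsto (fun i => ρ i γ) f (𝓝 (π γ)) := by
  have hγ : γ ∈ Subgroup.closure S := hS ▸ Subgroup.mem_top γ
  induction hγ using Subgroup.closure_induction with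
  | mem s hs => exact h s hs
  | one => simpa using tendsto_const_nhds
  | mul γ δ _ _ hγ hδ => simpa using hγ.mul hδ
  | inv γ _ hγ => simpa using hγ.inv

end Limits

/-- Derivations of `Γ` into the bimodule `R`, on which `Γ` acts through `ρ` on the left and through
`σ` on the right. If `Γ` is a group and `ρ = σ` has values in the units, `c` is such a derivation
iff `γ ↦ c γ * (σ γ)⁻¹` is a one-cocycle for the adjoint action. -/
def IsTwistedDerivation {Γ R : Type*} [Monoid Γ] [Ring R] (ρ σ : Γ →* R) (c : Γ → R) : Prop :=
  ∀ γ δ, c (γ * δ) = ρ γ * c δ + c γ * σ δ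

namespace IsTwistedDerivation

section Monoid

variable {Γ R : Type*} [Monoid Γ] [Ring R] {ρ σ : Γ →* R} {c : Γ → R}

protected lemma map_one (hc : IsTwistedDerivation ρ σ c) : c 1 = 0 := by
  simpa using hc 1 1

protected lemma smul {𝕜 : Type*} [CommSemiring 𝕜] [Algebra 𝕜 R] (hc : IsTwistedDerivation ρ σ c)
    (a : 𝕜) : IsTwistedDerivation ρ σ (a • c) := fun γ δ => by
  simp only [Pi.smul_apply, hc γ δ, smul_add, mul_smul_comm, smul_mul_assoc]

lemma inner (ρ σ : Γ →* R) (g : R) : IsTwistedDerivation ρ σ fun γ => ρ γ * g - g * σ γ :=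
  fun γ δ => by
    simp only [map_mul]
    noncomm_ring

end Monoid

variable {Γ R : Type*} [Group Γ] [Ring R] {ρ σ : Γ →* R} {c : Γ → R}

protected lemma map_inv (hc : IsTwistedDerivation ρ σ c) (γ : Γ) :
    c γ⁻¹ = -(ρ γ⁻¹ * c γ * σ γ⁻¹) := by
  have h : ρ γ⁻¹ * c γ + c γ⁻¹ * σ γ = 0 := by rw [← hc, inv_mul_cancel, hc.map_one]
  calc c γ⁻¹ = c γ⁻¹ * σ γ * σ γ⁻¹ := by
        rw [mul_assoc, ← map_mul, mul_inv_cancel, map_one, mul_one]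
    _ = -(ρ γ⁻¹ * c γ * σ γ⁻¹) := by rw [eq_neg_of_add_eq_zero_right h, neg_mul]

lemma exists_tendsto_of_closure_eq_top [TopologicalSpace R] [IsTopologicalRing R] [T2Space R]
    {ι : Type*} {f : Filter ι} [f.NeBot] {S : Set Γ} (hS : Subgroup.closure S = ⊤)
    {τ : ι → Γ →* R} (hτ : ∀ γ, Tendsto (fun i => τ i γ) f (𝓝 (ρ γ))) {d : ι → Γ → R}
    (hd : ∀ i, IsTwistedDerivation (τ i) σ (d i))
    (hdS : ∀ s ∈ S, ∃ l, Tendsto (fun i => d i s) f (𝓝 l)) :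
    ∃ l, IsTwistedDerivation ρ σ l ∧ ∀ γ, Tendsto (fun i => d i γ) f (𝓝 (l γ)) := by
  have hmul {γ δ : Γ} {a b : R} (ha : Tendsto (fun i => d i γ) f (𝓝 a))
      (hb : Tendsto (fun i => d i δ) f (𝓝 b)) :
      Tendsto (fun i => d i (γ * δ)) f (𝓝 (ρ γ * b + a * σ δ)) := by
    simpa only [hd _ γ δ] using ((hτ γ).mul hb).add (ha.mul_const (σ δ))
  have hlim (γ : Γ) : ∃ l, Tendsto (fun i => d i γ) f (𝓝 l) := by
    have hγ : γ ∈ Subgroup.closure S := hS ▸ Subgroup.mem_top γ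
    induction hγ using Subgroup.closure_induction with
    | mem s hs => exact hdS s hs
    | one => exact ⟨0, by simpa only [(hd _).map_one] using tendsto_const_nhds⟩
    | mul γ δ _ _ hγ hδ => exact ⟨_, hmul hγ.choose_spec hδ.choose_spec⟩
    | inv γ _ hγ =>
      obtain ⟨l, hl⟩ := hγ
      simp only [(hd _).map_inv]
      exact ⟨_, (((hτ γ⁻¹).mul hl).mul_const (σ γ⁻¹)).neg⟩
  choose l hl using hlim
  exact ⟨l, fun γ δ => tendsto_nhds_unique (hl (γ * δ)) (hmul (hl γ) (hl δ)), hl⟩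

lemma cocycle_mul_inv {π : Γ →* Rˣ}
    (hc : IsTwistedDerivation ((Units.coeHom R).comp π) ((Units.coeHom R).comp π) c) (γ δ : Γ) :
    c (γ * δ) * ↑(π (γ * δ))⁻¹ = c γ * ↑(π γ)⁻¹ + π γ * (c δ * ↑(π δ)⁻¹) * ↑(π γ)⁻¹ := by
  have hcγδ : c (γ * δ) = π γ * c δ + c γ * π δ := hc γ δ
  rw [hcγδ, map_mul, _root_.mul_inv_rev, Units.val_mul, add_comm, add_mul]
  simp only [mul_assoc, Units.mul_inv_cancel_left]

lemma exists_eq_inner_of_forall_cocycle {π : Γ →* Rˣ}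
    (hH1 : ∀ c : Γ → R, (∀ γ₁ γ₂, c (γ₁ * γ₂) = c γ₁ + π γ₁ * c γ₂ * ↑(π γ₁)⁻¹) →
      ∃ X, ∀ γ, c γ = π γ * X * ↑(π γ)⁻¹ - X)
    (hc : IsTwistedDerivation ((Units.coeHom R).comp π) ((Units.coeHom R).comp π) c) :
    ∃ X, ∀ γ, c γ = π γ * X - X * π γ := by
  obtain ⟨X, hX⟩ := hH1 (fun γ => c γ * ↑(π γ)⁻¹) hc.cocycle_mul_inv
  refine ⟨X, fun γ => ?_⟩
  calc c γ = c γ * ↑(π γ)⁻¹ * π γ := (Units.inv_mul_cancel_right _ _).symm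
    _ = π γ * X - X * π γ := by rw [hX, sub_mul, Units.inv_mul_cancel_right]

end IsTwistedDerivation

section Intertwining

variable {𝕜 A : Type*} [NontriviallyNormedField 𝕜] [NormedRing A] [NormedAlgebra 𝕜 A]

variable (𝕜) in
/-- The operator `X ↦ (a s * X - X * b s)_{s ∈ S}`, whose kernel consists of the elements that
intertwine `b` and `a` on `S`. -/
noncomputable def intertwiningDefect {Γ : Type*} (S : Set Γ) (a b : Γ → A) : A →L[𝕜] (S → A) :=
  .pi fun s => ContinuousLinearMap.mul 𝕜 A (a s) - (ContinuousLinearMap.mul 𝕜 A).flip (b s)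

lemma intertwiningDefect_apply {Γ : Type*} (S : Set Γ) (a b : Γ → A) (X : A) (s : S) :
    intertwiningDefect 𝕜 S a b X s = a s * X - X * b s := rfl

lemma continuous_intertwiningDefect [CompleteSpace 𝕜] [FiniteDimensional 𝕜 A] {Γ : Type*}
    (S : Set Γ) [Finite S] (b : Γ → A) :
    Continuous fun a : Γ → A => intertwiningDefect 𝕜 S a b := by
  cases nonempty_fintype S
  refine continuous_clm_apply.2 fun X => continuous_pi fun s => ?_
  simp only [intertwiningDefect_apply]
  fun_prop

lemma eq_zero_of_tendsto_smul_intertwiningDefect {Γ ι : Type*} [Group Γ] {S : Set Γ}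
    (hS : Subgroup.closure S = ⊤) {π : Γ →* A}
    (hπ : ∀ c, IsTwistedDerivation π π c → ∃ X, ∀ γ, c γ = π γ * X - X * π γ)
    {P : (S → A) →L[𝕜] A}
    (hP : intertwiningDefect 𝕜 S π π ∘L P ∘L intertwiningDefect 𝕜 S π π =
      intertwiningDefect 𝕜 S π π)
    {f : Filter ι} [f.NeBot] {ρ : ι → Γ →* A} (hρ : ∀ γ, Tendsto (fun i => ρ i γ) f (𝓝 (π γ)))
    {g : ι → A} (hg : ∀ᶠ i in f, P (intertwiningDefect 𝕜 S (ρ i) π (g i)) = 0)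
    {a : ι → 𝕜} {w : S → A}
    (hw : Tendsto (fun i => a i • intertwiningDefect 𝕜 S (ρ i) π (g i)) f (𝓝 w)) :
    w = 0 := by
  obtain ⟨l, hl, hlim⟩ := IsTwistedDerivation.exists_tendsto_of_closure_eq_top hS hρ
    (fun i => (IsTwistedDerivation.inner (ρ i) π (g i)).smul (a i))
    fun s hs => ⟨w ⟨s, hs⟩, tendsto_pi_nhds.1 hw ⟨s, hs⟩⟩
  obtain ⟨X, hX⟩ := hπ l hl
  have hwX : intertwiningDefect 𝕜 S π π X = w := by
    ext1 s
    exact (hX s).symm.trans (tendsto_nhds_unique (hlim s) (tendsto_pi_nhds.1 hw s))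
  have hPw : P w = 0 := by
    refine tendsto_nhds_unique ((P.continuous.tendsto w).comp hw) (tendsto_const_nhds.congr' ?_)
    filter_upwards [hg] with i hi
    simp only [Function.comp_apply, map_smul, hi, smul_zero]
  have hLPL := DFunLike.congr_fun hP X
  simp only [ContinuousLinearMap.comp_apply, hwX, hPw] at hLPL
  rw [← hLPL, map_zero]

variable (𝕜) in
lemma exists_tendsto_one_eventually_intertwining [LocallyCompactSpace 𝕜] [FiniteDimensional 𝕜 A]
    {Γ ι : Type*} [Group Γ] {S : Set Γ} (hSfin : S.Finite) (hS : Subgroup.closure S = ⊤)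
    {π : Γ →* A} (hπ : ∀ c, IsTwistedDerivation π π c → ∃ X, ∀ γ, c γ = π γ * X - X * π γ)
    {f : Filter ι} {ρ : ι → Γ →* A} (hρ : ∀ γ, Tendsto (fun i => ρ i γ) f (𝓝 (π γ))) :
    ∃ g : ι → A, Tendsto g f (𝓝 1) ∧ ∀ᶠ i in f, ∀ s ∈ S, ρ i s * g i = g i * π s := by
  have : Fintype S := hSfin.fintype
  have : ProperSpace 𝕜 := .of_locallyCompactSpace 𝕜
  have : ProperSpace A := FiniteDimensional.proper 𝕜 A
  let L (σ : Γ →* A) : A →L[𝕜] (S → A) := intertwiningDefect 𝕜 S σ π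
  obtain ⟨P, hLPL, hPLP⟩ := exists_generalizedInverse (L π).toLinearMap
  have hL : Tendsto (fun i => L (ρ i)) f (𝓝 (L π)) :=
    ((continuous_intertwiningDefect S π).tendsto π).comp (tendsto_pi_nhds.2 hρ)
  have hLone : L π 1 = 0 := by
    ext1 s
    simp [L, intertwiningDefect_apply]
  obtain ⟨g, hg, hPg⟩ := exists_tendsto_generalizedInverse_apply_eq_zero hL
    (P := P.toContinuousLinearMap) (ContinuousLinearMap.coe_injective hPLP) hLone
  have hLg : ∀ᶠ i in f, L (ρ i) (g i) = 0 :=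
    eventually_eq_zero_of_forall_tendsto_smul 𝕜 fun u hu _ a w hw =>
      eq_zero_of_tendsto_smul_intertwiningDefect hS hπ (P := P.toContinuousLinearMap)
        (ContinuousLinearMap.coe_injective hLPL) (fun γ => (hρ γ).mono_left hu)
        (hPg.filter_mono hu) hw
  refine ⟨g, hg, hLg.mono fun i hi s hs => sub_eq_zero.1 ?_⟩
  exact congrFun hi ⟨s, hs⟩

end Intertwining

lemma eq_conj_of_closure_eq_top {Γ G : Type*} [Group Γ] [Group G] {S : Set Γ}
    (hS : Subgroup.closure S = ⊤) {ρ π : Γ →* G} {u : G} (h : ∀ s ∈ S, ρ s * u = u * π s) (γ : Γ) :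
    ρ γ = u * π γ * u⁻¹ := by
  have hconj : ρ = (MulAut.conj u).toMonoidHom.comp π :=
    MonoidHom.eq_of_eqOn_dense hS fun s hs => eq_mul_inv_of_mul_eq (h s hs)
  exact DFunLike.congr_fun hconj γ

theorem eventually_exists_conj_eq (𝕜 : Type*) {A Γ ι : Type*} [NontriviallyNormedField 𝕜]
    [LocallyCompactSpace 𝕜] [NormedRing A] [NormedAlgebra 𝕜 A] [FiniteDimensional 𝕜 A] [Group Γ]
    {S : Set Γ} (hSfin : S.Finite) (hSgen : Subgroup.closure S = ⊤) {π : Γ →* Aˣ}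
    (hH1 : ∀ c : Γ → A, (∀ γ₁ γ₂, c (γ₁ * γ₂) = c γ₁ + π γ₁ * c γ₂ * ↑(π γ₁)⁻¹) →
      ∃ X, ∀ γ, c γ = π γ * X * ↑(π γ)⁻¹ - X)
    {f : Filter ι} {ρ : ι → Γ →* Aˣ} (hρ : ∀ s ∈ S, Tendsto (fun i => ρ i s) f (𝓝 (π s)))
    {U : Set Aˣ} (hU : U ∈ 𝓝 1) :
    ∀ᶠ i in f, ∃ g ∈ U, ∀ γ, ρ i γ = g * π γ * g⁻¹ := by
  have : ProperSpace A := FiniteDimensional.proper 𝕜 A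
  obtain ⟨g, hg, hgS⟩ := exists_tendsto_one_eventually_intertwining 𝕜 hSfin hSgen
    (π := (Units.coeHom A).comp π) (fun c hc => hc.exists_eq_inner_of_forall_cocycle hH1)
    (ρ := fun i => (Units.coeHom A).comp (ρ i)) fun γ =>
      (Units.continuous_val.tendsto _).comp (tendsto_apply_of_closure_eq_top hSgen hρ γ)
  have hUval : Units.val '' U ∈ 𝓝 (1 : A) := Units.isOpenEmbedding_val.isOpenMap.image_mem_nhds hU
  filter_upwards [hgS, hg.eventually hUval] with i hi ⟨u, huU, hu⟩
  refine ⟨u, huU, eq_conj_of_closure_eq_top hSgen fun s hs => Units.ext ?_⟩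
  simpa [hu] using hi s hs

end WeilRigidity

open WeilRigidity in
theorem weil_local_rigidity_GL_general (𝕜 : Type*) {A Γ : Type*} [NontriviallyNormedField 𝕜]
    [LocallyCompactSpace 𝕜] [NormedRing A] [NormedAlgebra 𝕜 A] [FiniteDimensional 𝕜 A] [Group Γ]
    {S : Set Γ} (hSfin : S.Finite) (hSgen : Subgroup.closure S = ⊤) (π : Γ →* Aˣ)
    (hH1 : ∀ c : Γ → A, (∀ γ₁ γ₂, c (γ₁ * γ₂) = c γ₁ + π γ₁ * c γ₂ * ↑(π γ₁)⁻¹) →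
      ∃ X, ∀ γ, c γ = π γ * X * ↑(π γ)⁻¹ - X) :
    ∀ U ∈ 𝓝 (1 : Aˣ), ∃ V ∈ 𝓝 (1 : Aˣ), ∀ π' : Γ →* Aˣ, (∀ s ∈ S, π' s * (π s)⁻¹ ∈ V) →
      ∃ g ∈ U, ∀ γ, π' γ = g * π γ * g⁻¹ := by
  intro U hU
  let quotient (π' : Γ →* Aˣ) (s : S) : Aˣ := π' s * (π s)⁻¹
  have hconv (s : Γ) (hs : s ∈ S) :
      Tendsto (fun π' : Γ →* Aˣ => π' s) (comap quotient (𝓝 fun _ => 1)) (𝓝 (π s)) := by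
    have hquotient : ∀ s : S, Tendsto (quotient · s) (comap quotient (𝓝 fun _ => 1)) (𝓝 1) :=
      tendsto_pi_nhds.1 tendsto_comap
    simpa [quotient] using (hquotient ⟨s, hs⟩).mul_const (π s)
  have hconj := eventually_exists_conj_eq 𝕜 hSfin hSgen hH1 hconv hU
  obtain ⟨V, hV, hVconj⟩ := exists_mem_nhds_forall_of_eventually (eventually_comap.1 hconj)
  exact ⟨V, hV, fun π' hπ' => hVconj (quotient π') (fun s => hπ' s s.2) π' rfl⟩

/-- **Weil's local rigidity criterion, for representations into `GL(n, ℝ)`.**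
Let `Γ` be a group generated by a finite set `S` and `π : Γ → GL(n, ℝ)` a homomorphism.
Let `Γ` act on the Lie algebra `M_n(ℝ)` of `GL(n, ℝ)` by `Ad ∘ π`, i.e.
`γ · X = π(γ) X π(γ)⁻¹`. If `H¹(Γ, M_n(ℝ)) = 0` — every cocycle
`c : Γ → M_n(ℝ)` with `c(γ₁γ₂) = c(γ₁) + γ₁ · c(γ₂)` is a coboundary
`c(γ) = γ · X − X` — then `π` is locally rigid: for every neighborhood `U` of `1` in
`GL(n, ℝ)` there is a neighborhood `V` of `1` such that every homomorphism
`π' : Γ → GL(n, ℝ)` with `π'(s) π(s)⁻¹ ∈ V` for all `s ∈ S` is conjugate to `π` by an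
element of `U`. -/
theorem weil_local_rigidity_GL
    {Γ : Type*} [Group Γ] (S : Set Γ) (hSfin : S.Finite)
    (hSgen : Subgroup.closure S = ⊤)
    (n : ℕ)
    (π : Γ →* GL (Fin n) ℝ)
    (hH1 : ∀ c : Γ → Matrix (Fin n) (Fin n) ℝ,
      (∀ γ₁ γ₂ : Γ,
        c (γ₁ * γ₂) = c γ₁ + (π γ₁ : Matrix (Fin n) (Fin n) ℝ) * c γ₂ * ((π γ₁)⁻¹ : GL (Fin n) ℝ)) →
      ∃ X : Matrix (Fin n) (Fin n) ℝ,
        ∀ γ : Γ,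
          c γ = (π γ : Matrix (Fin n) (Fin n) ℝ) * X * ((π γ)⁻¹ : GL (Fin n) ℝ) - X) :
    ∀ U ∈ nhds (1 : GL (Fin n) ℝ), ∃ V ∈ nhds (1 : GL (Fin n) ℝ),
      ∀ π' : Γ →* GL (Fin n) ℝ,
        (∀ s ∈ S, π' s * (π s)⁻¹ ∈ V) →
        ∃ g ∈ U, ∀ γ : Γ, π' γ = g * π γ * g⁻¹ := by
  open scoped Matrix.Norms.Operator in
  exact weil_local_rigidity_GL_general ℝ hSfin hSgen π hH1
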